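/- (Theorem 1, Riccati compatibility relation.) Let u, p be a smooth solution of the incompressible Euler equations and let ω = curl u. On the open set where ω ≠ 0, define α = ω̂·Sω̂, χ = ω̂×Sω̂, α_p = ω̂·Pω̂, χ_p = ω̂×Pω̂. Then at every such point the quaternion Riccati equation [Dα/Dt, Dχ/Dt] + [α,χ] * [α,χ] + [α_p,χ_p] = 0 holds; equivalently, in components, Dα/Dt = |χ|² − α² − α_p and Dχ/Dt = −2αχ − χ_p. -/

import Mathlib

noncomputable section

open scoped BigOperators

/-- Space-time: a point is a pair (t, x) with t ∈ ℝ, x ∈ ℝ³. -/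
abbrev Pt : Type := ℝ × (Fin 3 → ℝ)

/-- Euclidean dot product on ℝ³. -/
def dot3 (a b : Fin 3 → ℝ) : ℝ := a 0 * b 0 + a 1 * b 1 + a 2 * b 2

/-- Cross product on ℝ³. -/
def cross3 (a b : Fin 3 → ℝ) : Fin 3 → ℝ :=
  ![a 1 * b 2 - a 2 * b 1, a 2 * b 0 - a 0 * b 2, a 0 * b 1 - a 1 * b 0]

/-- Euclidean norm on ℝ³. -/
def norm3 (a : Fin 3 → ℝ) : ℝ := Real.sqrt (dot3 a a)

/-- The quaternion `[s, r]` with scalar part `s` and vector part `r`. -/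
def quat (s : ℝ) (r : Fin 3 → ℝ) : Quaternion ℝ := ⟨s, r 0, r 1, r 2⟩

/-- Material derivative `∂ₜ f + (a·∇)f` of a scalar field `f` along the
velocity field `a`, at the point `z`. -/
def mder (a : Pt → Fin 3 → ℝ) (f : Pt → ℝ) (z : Pt) : ℝ :=
  fderiv ℝ f z ((1 : ℝ), a z)

/-- Spatial partial derivative `∂f/∂xᵢ`. -/
def pd (i : Fin 3) (f : Pt → ℝ) (z : Pt) : ℝ :=
  fderiv ℝ f z ((0 : ℝ), Pi.single i 1)

/-- The vorticity `ω = curl u`. -/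
def vort (u : Pt → Fin 3 → ℝ) (z : Pt) : Fin 3 → ℝ :=
  ![pd 1 (fun q => u q 2) z - pd 2 (fun q => u q 1) z,
    pd 2 (fun q => u q 0) z - pd 0 (fun q => u q 2) z,
    pd 0 (fun q => u q 1) z - pd 1 (fun q => u q 0) z]

/-- The unit vorticity `ω̂ = ω/|ω|`. -/
def vortHat (u : Pt → Fin 3 → ℝ) (z : Pt) : Fin 3 → ℝ :=
  (norm3 (vort u z))⁻¹ • vort u z

/-- The strain matrix `S = ½(∇u + (∇u)ᵀ)` applied to a vector `v`. -/
def strainVec (u : Pt → Fin 3 → ℝ) (z : Pt) (v : Fin 3 → ℝ) : Fin 3 → ℝ :=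
  fun i => ∑ j : Fin 3,
    ((pd j (fun q => u q i) z + pd i (fun q => u q j) z) / 2) * v j

/-- The pressure Hessian `P = (∂²p/∂xᵢ∂xⱼ)` applied to a vector `v`. -/
def hessVec (p : Pt → ℝ) (z : Pt) (v : Fin 3 → ℝ) : Fin 3 → ℝ :=
  fun i => ∑ j : Fin 3, pd i (pd j p) z * v j

/-- The stretching rate `α = ω̂·Sω̂`. -/
def alphaF (u : Pt → Fin 3 → ℝ) (z : Pt) : ℝ :=
  dot3 (vortHat u z) (strainVec u z (vortHat u z))

/-- The swing rate `χ = ω̂×Sω̂`. -/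
def chiF (u : Pt → Fin 3 → ℝ) (z : Pt) : Fin 3 → ℝ :=
  cross3 (vortHat u z) (strainVec u z (vortHat u z))

/-- `α_p = ω̂·Pω̂`. -/
def alphaP (u : Pt → Fin 3 → ℝ) (p : Pt → ℝ) (z : Pt) : ℝ :=
  dot3 (vortHat u z) (hessVec p z (vortHat u z))

/-- `χ_p = ω̂×Pω̂`. -/
def chiP (u : Pt → Fin 3 → ℝ) (p : Pt → ℝ) (z : Pt) : Fin 3 → ℝ :=
  cross3 (vortHat u z) (hessVec p z (vortHat u z))

/-- `f` is differentiable at `z` with material derivative `d`. -/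
def MD (u : Pt → Fin 3 → ℝ) (z : Pt) (f : Pt → ℝ) (d : ℝ) : Prop :=
  DifferentiableAt ℝ f z ∧ mder u f z = d

theorem MD.add {u : Pt → Fin 3 → ℝ} {z : Pt} {f g : Pt → ℝ} {a b : ℝ}
    (hf : MD u z f a) (hg : MD u z g b) : MD u z (fun q => f q + g q) (a + b) := by
  refine ⟨hf.1.add hg.1, ?_⟩
  rw [← hf.2, ← hg.2]
  unfold mder
  rw [(hf.1.hasFDerivAt.fun_add hg.1.hasFDerivAt).fderiv]
  rfl

theorem MD.sub {u : Pt → Fin 3 → ℝ} {z : Pt} {f g : Pt → ℝ} {a b : ℝ}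
    (hf : MD u z f a) (hg : MD u z g b) : MD u z (fun q => f q - g q) (a - b) := by
  refine ⟨hf.1.sub hg.1, ?_⟩
  rw [← hf.2, ← hg.2]
  unfold mder
  rw [(hf.1.hasFDerivAt.fun_sub hg.1.hasFDerivAt).fderiv]
  rfl

theorem MD.mul {u : Pt → Fin 3 → ℝ} {z : Pt} {f g : Pt → ℝ} {a b : ℝ}
    (hf : MD u z f a) (hg : MD u z g b) :
    MD u z (fun q => f q * g q) (f z * b + g z * a) := by
  refine ⟨hf.1.mul hg.1, ?_⟩
  rw [← hf.2, ← hg.2]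
  unfold mder
  rw [(hf.1.hasFDerivAt.fun_mul hg.1.hasFDerivAt).fderiv]
  simp

theorem MD.div {u : Pt → Fin 3 → ℝ} {z : Pt} {f g : Pt → ℝ} {a b : ℝ}
    (hf : MD u z f a) (hg : MD u z g b) (h0 : g z ≠ 0) :
    MD u z (fun q => f q / g q) ((a * g z - f z * b) / g z ^ 2) := by
  have hd : DifferentiableAt ℝ (fun q => f q / g q) z := by
    simpa [div_eq_mul_inv] using hf.1.fun_mul (hg.1.fun_inv h0)
  refine ⟨hd, ?_⟩
  have hm := (MD.mul (u := u) ⟨hd, rfl⟩ hg).2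
  have hne : ∀ᶠ q in nhds z, g q ≠ 0 := hg.1.continuousAt.eventually_ne h0
  have he : (fun q => f q / g q * g q) =ᶠ[nhds z] f := by
    filter_upwards [hne] with q hq
    field_simp
  have h2 : mder u (fun q => f q / g q * g q) z = a := by
    rw [← hf.2]; unfold mder; rw [he.fderiv_eq]
  rw [h2] at hm
  rw [hm]
  field_simp
  ring

theorem pd_diff (f : Pt → ℝ) (hf : ContDiff ℝ (⊤ : ℕ∞) f) (j : Fin 3) (z : Pt) :
    DifferentiableAt ℝ (pd j f) z := by
  have h1 : ContDiff ℝ (⊤ : ℕ∞) (fderiv ℝ f) := hf.fderiv_right (by simp)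
  have h2 : DifferentiableAt ℝ (fderiv ℝ f) z := h1.differentiable (by simp) z
  unfold pd
  fun_prop

theorem mder_pd (u : Pt → Fin 3 → ℝ) (f : Pt → ℝ)
    (hu : ContDiff ℝ (⊤ : ℕ∞) u) (hf : ContDiff ℝ (⊤ : ℕ∞) f) (j : Fin 3) (z : Pt) :
    mder u (pd j f) z =
      pd j (mder u f) z - ∑ k : Fin 3, pd k f z * pd j (fun q => u q k) z := by
  have h1 : ContDiff ℝ (⊤ : ℕ∞) (fderiv ℝ f) := hf.fderiv_right (by simp)
  have h2 : DifferentiableAt ℝ (fderiv ℝ f) z := h1.differentiable (by simp) z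
  have hud : DifferentiableAt ℝ u z := hu.differentiable (by simp) z
  have hsym : IsSymmSndFDerivAt ℝ f z :=
    hf.contDiffAt.isSymmSndFDerivAt
      (by simp only [minSmoothness_of_isRCLikeNormedField]; exact WithTop.coe_le_coe.2 (le_top : (2 : ℕ∞) ≤ ⊤))
  have hA : mder u (pd j f) z
      = fderiv ℝ (fderiv ℝ f) z (1, u z) (0, Pi.single j 1) := by
    unfold mder pd
    have := (h2.hasFDerivAt.clm_apply
      (hasFDerivAt_const ((0 : ℝ), (Pi.single j 1 : Fin 3 → ℝ)) z)).fderiv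
    rw [this]
    simp
  have hB : pd j (mder u f) z
      = fderiv ℝ (fderiv ℝ f) z (0, Pi.single j 1) (1, u z)
        + fderiv ℝ f z (0, fderiv ℝ u z (0, Pi.single j 1)) := by
    unfold mder pd
    have := (h2.hasFDerivAt.clm_apply
      ((hasFDerivAt_const (1 : ℝ) z).prodMk hud.hasFDerivAt)).fderiv
    rw [this]
    simp [add_comm]
  have hC : fderiv ℝ f z (0, fderiv ℝ u z (0, Pi.single j 1))
      = ∑ k : Fin 3, pd k f z * pd j (fun q => u q k) z := by
    have hk : ∀ k, pd j (fun q => u q k) z = fderiv ℝ u z (0, Pi.single j 1) k := by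
      intro k
      unfold pd
      rw [(hasFDerivAt_pi'.1 hud.hasFDerivAt k).fderiv]
      rfl
    simp only [hk]
    generalize fderiv ℝ u z (0, Pi.single j 1) = v
    have hv : ((0 : ℝ), v) = ∑ k : Fin 3, v k • ((0 : ℝ), (Pi.single k 1 : Fin 3 → ℝ)) := by
      ext i
      · simp [Fin.sum_univ_three]
      · fin_cases i <;> simp [Fin.sum_univ_three]
    rw [hv, map_sum]
    refine Finset.sum_congr rfl fun k _ => ?_
    rw [map_smul, smul_eq_mul, mul_comm]
    rfl
  rw [hA, hB, hC, hsym.eq]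
  ring

theorem norm3_inv_sq (a : Fin 3 → ℝ) :
    (norm3 a)⁻¹ * (norm3 a)⁻¹ = (dot3 a a)⁻¹ := by
  have h : 0 ≤ dot3 a a := by unfold dot3; nlinarith [mul_self_nonneg (a 0), mul_self_nonneg (a 1), mul_self_nonneg (a 2)]
  rw [← mul_inv, norm3, Real.mul_self_sqrt h]

theorem dot_scale (a b : Fin 3 → ℝ) (c : ℝ) :
    dot3 (c • a) (c • b) = (c * c) * dot3 a b := by
  simp [dot3]; ring

theorem cross_scale (a b : Fin 3 → ℝ) (c : ℝ) :
    cross3 (c • a) (c • b) = (c * c) • cross3 a b := by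
  ext i; fin_cases i <;> simp [cross3] <;> ring

theorem strain_smul (u : Pt → Fin 3 → ℝ) (z : Pt) (c : ℝ) (v : Fin 3 → ℝ) :
    strainVec u z (c • v) = c • strainVec u z v := by
  ext i; simp [strainVec, Fin.sum_univ_three]; ring

theorem hess_smul (p : Pt → ℝ) (z : Pt) (c : ℝ) (v : Fin 3 → ℝ) :
    hessVec p z (c • v) = c • hessVec p z v := by
  ext i; simp [hessVec, Fin.sum_univ_three]; ring

theorem alphaF_eq (u : Pt → Fin 3 → ℝ) (q : Pt) : alphaF u q =
    dot3 (vort u q) (strainVec u q (vort u q)) / dot3 (vort u q) (vort u q) := by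
  rw [alphaF, vortHat, strain_smul, dot_scale, norm3_inv_sq, div_eq_inv_mul]

theorem chiF_eq (u : Pt → Fin 3 → ℝ) (q : Pt) (i : Fin 3) : chiF u q i =
    cross3 (vort u q) (strainVec u q (vort u q)) i / dot3 (vort u q) (vort u q) := by
  rw [chiF, vortHat, strain_smul, cross_scale, norm3_inv_sq, div_eq_inv_mul]; rfl

theorem alphaP_eq (u : Pt → Fin 3 → ℝ) (p : Pt → ℝ) (q : Pt) : alphaP u p q =
    dot3 (vort u q) (hessVec p q (vort u q)) / dot3 (vort u q) (vort u q) := by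
  rw [alphaP, vortHat, hess_smul, dot_scale, norm3_inv_sq, div_eq_inv_mul]

theorem chiP_eq (u : Pt → Fin 3 → ℝ) (p : Pt → ℝ) (q : Pt) (i : Fin 3) : chiP u p q i =
    cross3 (vort u q) (hessVec p q (vort u q)) i / dot3 (vort u q) (vort u q) := by
  rw [chiP, vortHat, hess_smul, cross_scale, norm3_inv_sq, div_eq_inv_mul]; rfl

/-- `Sω = (∇u)ω`. -/
theorem strain_vort (u : Pt → Fin 3 → ℝ) (q : Pt) (i : Fin 3) :
    strainVec u q (vort u q) i =
      pd 0 (fun q => u q i) q * vort u q 0 + pd 1 (fun q => u q i) q * vort u q 1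
        + pd 2 (fun q => u q i) q * vort u q 2 := by
  fin_cases i <;> simp [strainVec, vort, Fin.sum_univ_three] <;> ring

theorem MD_grad (u : Pt → Fin 3 → ℝ) (p : Pt → ℝ)
    (hu : ContDiff ℝ (⊤ : ℕ∞) u)
    (heuler : ∀ z i, mder u (fun q => u q i) z = - pd i p z) (z : Pt) (i j : Fin 3) :
    MD u z (pd j (fun q => u q i)) (- pd j (pd i p) z -
      ∑ k : Fin 3, pd k (fun q => u q i) z * pd j (fun q => u q k) z) := by
  have hui : ContDiff ℝ (⊤ : ℕ∞) (fun q => u q i) := contDiff_pi.1 hu i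
  refine ⟨pd_diff _ hui j z, ?_⟩
  rw [mder_pd u _ hu hui]
  have : mder u (fun q => u q i) = fun q => - pd i p q := funext fun q => heuler q i
  rw [this]
  have h2 : pd j (fun q => - pd i p q) z = - pd j (pd i p) z := by
    unfold pd
    rw [fderiv_fun_neg]; rfl
  rw [h2]

theorem pd_comm (p : Pt → ℝ) (hp : ContDiff ℝ (⊤ : ℕ∞) p) (i j : Fin 3) (z : Pt) :
    pd i (pd j p) z = pd j (pd i p) z := by
  have h1 : ContDiff ℝ (⊤ : ℕ∞) (fderiv ℝ p) := hp.fderiv_right (by simp)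
  have h2 : DifferentiableAt ℝ (fderiv ℝ p) z := h1.differentiable (by simp) z
  have hsym : IsSymmSndFDerivAt ℝ p z :=
    hp.contDiffAt.isSymmSndFDerivAt
      (by simp only [minSmoothness_of_isRCLikeNormedField]; exact WithTop.coe_le_coe.2 (le_top : (2 : ℕ∞) ≤ ⊤))
  have key : ∀ i j, pd i (pd j p) z
      = fderiv ℝ (fderiv ℝ p) z (0, Pi.single i 1) (0, Pi.single j 1) := by
    intro i j
    unfold pd
    have := (h2.hasFDerivAt.clm_apply
      (hasFDerivAt_const ((0 : ℝ), (Pi.single j 1 : Fin 3 → ℝ)) z)).fderiv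
    rw [this]
    simp
  rw [key, key, hsym.eq]

theorem MD.congr {u : Pt → Fin 3 → ℝ} {z : Pt} {f g : Pt → ℝ} {a b : ℝ}
    (hf : MD u z f a) (h : g = f) (hab : b = a) : MD u z g b := by
  subst h; subst hab; exact hf

/-- The vorticity equation `Dω/Dt = Sω`. -/
theorem MD_vort (u : Pt → Fin 3 → ℝ) (p : Pt → ℝ)
    (hu : ContDiff ℝ (⊤ : ℕ∞) u) (hp : ContDiff ℝ (⊤ : ℕ∞) p)
    (heuler : ∀ z i, mder u (fun q => u q i) z = - pd i p z)
    (hdiv : ∀ z, ∑ i : Fin 3, pd i (fun q => u q i) z = 0) (z : Pt) (i : Fin 3) :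
    MD u z (fun q => vort u q i) (strainVec u z (vort u z) i) := by
  have G := MD_grad u p hu heuler z
  have hd := hdiv z
  have c01 := pd_comm p hp 0 1 z
  have c02 := pd_comm p hp 0 2 z
  have c12 := pd_comm p hp 1 2 z
  rw [strain_vort]
  rw [Fin.sum_univ_three] at hd
  fin_cases i
  · refine ((G 2 1).sub (G 1 2)).congr rfl ?_
    simp only [Fin.sum_univ_three, vort, Fin.zero_eta, Matrix.cons_val]
    rw [c12]
    rw [← eq_neg_iff_add_eq_zero] at hd
    linear_combination (pd 1 (fun q => u q 2) z - pd 2 (fun q => u q 1) z) * hd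
  · refine ((G 0 2).sub (G 2 0)).congr rfl ?_
    simp only [Fin.sum_univ_three, vort, Fin.mk_one, Matrix.cons_val]
    rw [c02]
    linear_combination (pd 2 (fun q => u q 0) z - pd 0 (fun q => u q 2) z) * hd
  · refine ((G 1 0).sub (G 0 1)).congr rfl ?_
    simp only [Fin.sum_univ_three, vort, Fin.reduceFinMk, Matrix.cons_val]
    rw [c01]
    linear_combination (pd 0 (fun q => u q 1) z - pd 1 (fun q => u q 0) z) * hd

/-- Ertel: `D(Sω)/Dt = -Pω`. -/
theorem MD_strain (u : Pt → Fin 3 → ℝ) (p : Pt → ℝ)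
    (hu : ContDiff ℝ (⊤ : ℕ∞) u) (hp : ContDiff ℝ (⊤ : ℕ∞) p)
    (heuler : ∀ z i, mder u (fun q => u q i) z = - pd i p z)
    (hdiv : ∀ z, ∑ i : Fin 3, pd i (fun q => u q i) z = 0) (z : Pt) (i : Fin 3) :
    MD u z (fun q => strainVec u q (vort u q) i) (- hessVec p z (vort u z) i) := by
  have G := MD_grad u p hu heuler z i
  have W := MD_vort u p hu hp heuler hdiv z
  refine ((((G 0).mul (W 0)).add ((G 1).mul (W 1))).add ((G 2).mul (W 2))).congr
    (funext fun q => strain_vort u q i) ?_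
  simp only [strain_vort, hessVec, Fin.sum_univ_three]
  rw [pd_comm p hp i 0, pd_comm p hp i 1, pd_comm p hp i 2]
  ring

theorem quat_aux (a b : ℝ) (x y : Fin 3 → ℝ) :
    quat (dot3 x x - a ^ 2 - b) (fun i => -2 * a * x i - y i) + quat a x * quat a x
      + quat b y = 0 := by
  apply Quaternion.ext
  · rw [Quaternion.re_add, Quaternion.re_add, Quaternion.re_mul]
    simp only [quat, dot3, Quaternion.re_zero]
    ring
  · rw [Quaternion.imI_add, Quaternion.imI_add, Quaternion.imI_mul]
    simp only [quat, dot3, Quaternion.imI_zero]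
    ring
  · rw [Quaternion.imJ_add, Quaternion.imJ_add, Quaternion.imJ_mul]
    simp only [quat, dot3, Quaternion.imJ_zero]
    ring
  · rw [Quaternion.imK_add, Quaternion.imK_add, Quaternion.imK_mul]
    simp only [quat, dot3, Quaternion.imK_zero]
    ring

/-- Theorem 1, Riccati compatibility relation: for a smooth
Euler solution, at every point where `ω ≠ 0`,
`[Dα/Dt, Dχ/Dt] + [α,χ]*[α,χ] + [α_p,χ_p] = 0`; in components,
`Dα/Dt = |χ|² − α² − α_p` and `Dχ/Dt = −2αχ − χ_p`. -/
theorem riccati_compatibility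
    (u : Pt → Fin 3 → ℝ) (p : Pt → ℝ)
    (hu : ContDiff ℝ (⊤ : ℕ∞) u) (hp : ContDiff ℝ (⊤ : ℕ∞) p)
    (heuler : ∀ z i, mder u (fun q => u q i) z = - pd i p z)
    (hdiv : ∀ z, ∑ i : Fin 3, pd i (fun q => u q i) z = 0)
    (z : Pt) (hω : vort u z ≠ 0) :
    (quat (mder u (alphaF u) z) (fun i => mder u (fun q => chiF u q i) z) +
      quat (alphaF u z) (chiF u z) * quat (alphaF u z) (chiF u z) +
      quat (alphaP u p z) (chiP u p z) = 0) ∧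
    (mder u (alphaF u) z =
      norm3 (chiF u z) ^ 2 - alphaF u z ^ 2 - alphaP u p z) ∧
    (∀ i, mder u (fun q => chiF u q i) z =
      -2 * alphaF u z * chiF u z i - chiP u p z i) := by
  have W := MD_vort u p hu hp heuler hdiv z
  have T := MD_strain u p hu hp heuler hdiv z
  have hn : dot3 (vort u z) (vort u z) ≠ 0 := by
    intro h
    apply hω
    unfold dot3 at h
    have h0 := mul_self_nonneg (vort u z 0)
    have h1 := mul_self_nonneg (vort u z 1)
    have h2 := mul_self_nonneg (vort u z 2)
    ext i
    fin_cases i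
    · exact mul_self_eq_zero.1 (show vort u z 0 * vort u z 0 = 0 by linarith)
    · exact mul_self_eq_zero.1 (show vort u z 1 * vort u z 1 = 0 by linarith)
    · exact mul_self_eq_zero.1 (show vort u z 2 * vort u z 2 = 0 by linarith)
  have N := (((W 0).mul (W 0)).add ((W 1).mul (W 1))).add ((W 2).mul (W 2))
  have A := ((((W 0).mul (T 0)).add ((W 1).mul (T 1))).add ((W 2).mul (T 2))).div N hn
  have X0 := (((W 1).mul (T 2)).sub ((W 2).mul (T 1))).div N hn
  have X1 := (((W 2).mul (T 0)).sub ((W 0).mul (T 2))).div N hn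
  have X2 := (((W 0).mul (T 1)).sub ((W 1).mul (T 0))).div N hn
  have eA := (A.congr (g := alphaF u) (funext fun q => alphaF_eq u q) rfl).2
  have e0 := (X0.congr (g := fun q => chiF u q 0) (funext fun q => chiF_eq u q 0) rfl).2
  have e1 := (X1.congr (g := fun q => chiF u q 1) (funext fun q => chiF_eq u q 1) rfl).2
  have e2 := (X2.congr (g := fun q => chiF u q 2) (funext fun q => chiF_eq u q 2) rfl).2
  have hA : mder u (alphaF u) z =
      norm3 (chiF u z) ^ 2 - alphaF u z ^ 2 - alphaP u p z := by
    have hsq : norm3 (chiF u z) ^ 2 = dot3 (chiF u z) (chiF u z) := by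
      unfold norm3
      apply Real.sq_sqrt
      unfold dot3
      nlinarith [mul_self_nonneg (chiF u z 0), mul_self_nonneg (chiF u z 1),
        mul_self_nonneg (chiF u z 2)]
    rw [eA, hsq, alphaF_eq, alphaP_eq]
    simp only [dot3, chiF_eq, cross3, Matrix.cons_val] at hn ⊢
    field_simp
    ring
  have hX : ∀ i, mder u (fun q => chiF u q i) z =
      -2 * alphaF u z * chiF u z i - chiP u p z i := by
    intro i
    rw [alphaF_eq, chiF_eq, chiP_eq]
    fin_cases i
    · refine e0.trans ?_
      simp only [dot3, cross3, Fin.zero_eta, Matrix.cons_val] at hn ⊢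
      field_simp
      ring
    · refine e1.trans ?_
      simp only [dot3, cross3, Fin.mk_one, Matrix.cons_val] at hn ⊢
      field_simp
      ring
    · refine e2.trans ?_
      simp only [dot3, cross3, Fin.reduceFinMk, Matrix.cons_val] at hn ⊢
      field_simp
      ring
  refine ⟨?_, hA, hX⟩
  have hsq : norm3 (chiF u z) ^ 2 = dot3 (chiF u z) (chiF u z) := by
    unfold norm3
    apply Real.sq_sqrt
    unfold dot3
    nlinarith [mul_self_nonneg (chiF u z 0), mul_self_nonneg (chiF u z 1),
      mul_self_nonneg (chiF u z 2)]
  simp only [hA, hX, hsq]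
  exact quat_aux _ _ _ _
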